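/- Let μ be a finite Borel measure on ℝⁿ such that for every integer m ≥ 1 and every coordinate index 1 ≤ j ≤ n the absolute moment S_j(m) = ∫_{ℝⁿ} |λ_j|ᵐ dμ(λ) is finite. Suppose that for every j ∈ {1, …, n} the even moments satisfy Carleman's condition ∑_{m=1}^∞ S_j(2m)^{-1/(2m)} = ∞. Then the set of (complex-valued) polynomial functions on ℝⁿ is dense in L¹(ℝⁿ, μ). -/

import Mathlib

open MeasureTheory

/-!
For `u` in `L²` and a real function `X` with finite moments, the curve `t ↦ exp (i t X) u` in `L¹`
has `k`-th derivative of norm at most `‖X ^ k‖₂ ‖u‖₂`. Modulo a closed subspace containing every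
`X ^ k u` it vanishes to infinite order at `t = 0`, so when `∑ ‖X ^ m‖₂ ^ (-1/m)` diverges it
vanishes identically by the Denjoy–Carleman theorem: Carleman's inequality turns the divergence into
that of `∑ ‖X ^ k‖₂ / ‖X ^ (k + 1)‖₂`, and Bang's argument propagates the infinite-order zero in
steps of lengths proportional to these ratios. Treating the coordinates one after the other, the
closure of the polynomials contains every trigonometric function `exp (i ⟨t, X⟩)`, and these span a
dense subspace by uniqueness of Fourier transforms.
-/

-- The products of these weights telescope, so that AM-GM applied to the weighted terms yields
-- Carleman's inequality (Pólya's proof).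
open Finset in
theorem prod_range_carleman_weight (m : ℕ) :
    ∏ i ∈ range m, ((i : ℝ) + 2) ^ (i + 1) / ((i : ℝ) + 1) ^ i = ((m : ℝ) + 1) ^ m := by
  induction m with
  | zero => simp
  | succ m ih =>
    rw [prod_range_succ, ih, mul_div_cancel₀ _ (by positivity)]
    push_cast
    ring

theorem carleman_weight_le (i : ℕ) :
    ((i : ℝ) + 2) ^ (i + 1) / ((i : ℝ) + 1) ^ i ≤ Real.exp 1 * ((i : ℝ) + 1) := by
  have hi : (0 : ℝ) < (i : ℝ) + 1 := by positivity
  calc ((i : ℝ) + 2) ^ (i + 1) / ((i : ℝ) + 1) ^ i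
      = (1 / ((i : ℝ) + 1) + 1) ^ (i + 1) * ((i : ℝ) + 1) := by
        rw [div_add_one hi.ne', div_pow]
        field_simp
        ring
    _ ≤ Real.exp (1 / ((i : ℝ) + 1)) ^ (i + 1) * ((i : ℝ) + 1) := by
        gcongr
        exact Real.add_one_le_exp _
    _ = Real.exp 1 * ((i : ℝ) + 1) := by
        rw [← Real.exp_nat_mul]
        push_cast
        rw [mul_one_div_cancel hi.ne']

open Finset in
theorem sum_range_sum_div_add_sum_div (b : ℕ → ℝ) (K : ℕ) :
    ∑ m ∈ range K, (∑ i ∈ range (m + 1), b i) / (((m : ℝ) + 1) * ((m : ℝ) + 2))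
      + (∑ i ∈ range K, b i) / ((K : ℝ) + 1) = ∑ i ∈ range K, b i / ((i : ℝ) + 1) := by
  induction K with
  | zero => simp
  | succ K ih =>
    rw [sum_range_succ _ K, sum_range_succ (fun i => b i / ((i : ℝ) + 1)), ← ih,
      sum_range_succ b]
    push_cast
    field_simp
    ring

open Finset in
theorem geom_mean_le_carleman_average {a : ℕ → ℝ} (ha : ∀ i, 0 ≤ a i) (m : ℕ) :
    (∏ i ∈ range (m + 1), a i) ^ (1 / ((m : ℝ) + 1)) ≤
      (∑ i ∈ range (m + 1), ((i : ℝ) + 2) ^ (i + 1) / ((i : ℝ) + 1) ^ i * a i) /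
        (((m : ℝ) + 1) * ((m : ℝ) + 2)) := by
  have hm : (0 : ℝ) < (m : ℝ) + 1 := by positivity
  have hca (i : ℕ) : 0 ≤ ((i : ℝ) + 2) ^ (i + 1) / ((i : ℝ) + 1) ^ i * a i := by
    have := ha i
    positivity
  have hroot : (((m : ℝ) + 2) ^ (m + 1)) ^ (1 / ((m : ℝ) + 1)) = (m : ℝ) + 2 := by
    rw [one_div, ← Nat.cast_succ, Real.pow_rpow_inv_natCast (by positivity) m.succ_ne_zero]
  have amgm := Real.geom_mean_le_arith_mean_weighted (range (m + 1))
    (fun _ => 1 / ((m : ℝ) + 1)) _ (fun _ _ => by positivity)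
    (by simp [mul_inv_cancel₀ hm.ne']) (fun i _ => hca i)
  rw [Real.finsetProd_rpow _ _ (fun i _ => hca i), ← mul_sum, prod_mul_distrib,
    prod_range_carleman_weight, Nat.cast_succ, add_assoc, one_add_one_eq_two,
    Real.mul_rpow (by positivity) (prod_nonneg fun i _ => ha i), hroot] at amgm
  rw [le_div_iff₀ (by positivity)]
  calc _ = ((m : ℝ) + 1) *
        (((m : ℝ) + 2) * (∏ i ∈ range (m + 1), a i) ^ (1 / ((m : ℝ) + 1))) := by ring
    _ ≤ ((m : ℝ) + 1) * (1 / ((m : ℝ) + 1) *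
        ∑ i ∈ range (m + 1), ((i : ℝ) + 2) ^ (i + 1) / ((i : ℝ) + 1) ^ i * a i) := by gcongr
    _ = _ := by rw [← mul_assoc, mul_one_div_cancel hm.ne', one_mul]

open Finset in
theorem carleman_inequality {a : ℕ → ℝ} (ha : ∀ i, 0 ≤ a i) (K : ℕ) :
    ∑ m ∈ range K, (∏ i ∈ range (m + 1), a i) ^ (1 / ((m : ℝ) + 1)) ≤
      Real.exp 1 * ∑ i ∈ range K, a i := by
  set b : ℕ → ℝ := fun i => ((i : ℝ) + 2) ^ (i + 1) / ((i : ℝ) + 1) ^ i * a i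
  have hb (i : ℕ) : 0 ≤ b i := by
    have := ha i
    positivity
  calc ∑ m ∈ range K, (∏ i ∈ range (m + 1), a i) ^ (1 / ((m : ℝ) + 1))
      ≤ ∑ m ∈ range K, (∑ i ∈ range (m + 1), b i) / (((m : ℝ) + 1) * ((m : ℝ) + 2)) :=
        sum_le_sum fun m _ => geom_mean_le_carleman_average ha m
    _ ≤ ∑ i ∈ range K, b i / ((i : ℝ) + 1) := by
        rw [← sum_range_sum_div_add_sum_div]
        have := sum_nonneg fun i (_ : i ∈ range K) => hb i
        exact le_add_of_nonneg_right (by positivity)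
    _ ≤ ∑ i ∈ range K, Real.exp 1 * a i := by
        refine sum_le_sum fun i _ => ?_
        rw [div_le_iff₀ (by positivity), mul_right_comm]
        exact mul_le_mul_of_nonneg_right (carleman_weight_le i) (ha i)
    _ = Real.exp 1 * ∑ i ∈ range K, a i := (mul_sum ..).symm

theorem summable_geom_mean {a : ℕ → ℝ} (ha : ∀ i, 0 ≤ a i) (hs : Summable a) :
    Summable fun m : ℕ => (∏ i ∈ Finset.range (m + 1), a i) ^ (1 / ((m : ℝ) + 1)) :=
  summable_of_sum_range_le (c := Real.exp 1 * ∑' i, a i)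
    (fun _ => Real.rpow_nonneg (Finset.prod_nonneg fun i _ => ha i) _) fun K =>
    (carleman_inequality ha K).trans <|
      mul_le_mul_of_nonneg_left (hs.sum_le_tsum _ fun i _ => ha i) (Real.exp_pos 1).le

/-- Carleman's condition on a sequence of norms: the series `∑ (M m)^(-1/m)`, `m ≥ 1`, diverges.
The summation index is shifted by one. -/
def CarlemanDivergent (M : ℕ → ℝ) : Prop :=
  ¬ Summable fun m : ℕ => M (m + 1) ^ (-(1 / ((m : ℝ) + 1)))

theorem CarlemanDivergent.not_summable_ratio {M : ℕ → ℝ} (hdiv : CarlemanDivergent M)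
    (hM : ∀ k, 0 < M k) : ¬ Summable fun k => M k / M (k + 1) := by
  intro hs
  have hprod (m : ℕ) : ∏ i ∈ Finset.range m, M i / M (i + 1) = M 0 / M m := by
    induction m with
    | zero => simp [(hM 0).ne']
    | succ m ih => rw [Finset.prod_range_succ, ih, div_mul_div_cancel₀ (hM m).ne']
  have hmean := summable_geom_mean (fun k => (div_pos (hM k) (hM (k + 1))).le) hs
  refine hdiv <| .of_nonneg_of_le (fun m => Real.rpow_nonneg (hM _).le _) (fun m => ?_)
    (hmean.mul_left (max 1 (M 0)⁻¹))
  have hexp : 1 / ((m : ℝ) + 1) ≤ 1 := by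
    rw [div_le_one (by positivity)]
    simp
  have hfactor : (M 0)⁻¹ ^ (1 / ((m : ℝ) + 1)) ≤ max 1 (M 0)⁻¹ :=
    calc (M 0)⁻¹ ^ (1 / ((m : ℝ) + 1)) ≤ max 1 (M 0)⁻¹ ^ (1 / ((m : ℝ) + 1)) := by
          have := (inv_pos.2 (hM 0)).le
          gcongr
          exact le_max_right _ _
      _ ≤ max 1 (M 0)⁻¹ := Real.rpow_le_self_of_one_le (le_max_left _ _) hexp
  calc M (m + 1) ^ (-(1 / ((m : ℝ) + 1)))
      = (M 0)⁻¹ ^ (1 / ((m : ℝ) + 1)) * (M 0 / M (m + 1)) ^ (1 / ((m : ℝ) + 1)) := by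
        rw [← Real.mul_rpow (inv_pos.2 (hM 0)).le (div_pos (hM 0) (hM _)).le,
          inv_mul_eq_div, div_div_cancel_left' (hM 0).ne', Real.inv_rpow (hM _).le,
          Real.rpow_neg (hM _).le]
    _ ≤ _ := by
        rw [hprod]
        gcongr
        exact Real.rpow_nonneg (div_pos (hM 0) (hM _)).le _

theorem CarlemanDivergent.pos {M : ℕ → ℝ} (hdiv : CarlemanDivergent M) (hM : ∀ k, 0 ≤ M k)
    (hlc : ∀ k, M (k + 1) ^ 2 ≤ M k * M (k + 2)) (k : ℕ) : 0 < M k := by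
  -- A vanishing term forces all later ones to vanish, and then `0 ^ (-1/m) = 0` is summable.
  refine (hM k).lt_of_ne fun hk => hdiv ?_
  have hzero : ∀ j, k ≤ j → M j = 0 :=
    Nat.le_induction hk.symm fun j _ hj =>
      pow_eq_zero_iff two_ne_zero |>.1 <| le_antisymm (by simpa [hj] using hlc j) (sq_nonneg _)
  refine summable_of_ne_finset_zero (s := Finset.range k) fun m hm => ?_
  rw [hzero (m + 1) (by grind), Real.zero_rpow (neg_ne_zero.2 (by positivity))]

section QuasiAnalytic

variable {F : Type*} [NormedAddCommGroup F] [NormedSpace ℝ F] {f : ℕ → ℝ → F}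

theorem norm_sub_taylor_sum_le_of_nonneg (hf : ∀ k t, HasDerivAt (f k) (f (k + 1) t) t) {r : ℕ}
    {B : ℝ} (hB : ∀ t, ‖f r t‖ ≤ B) {t : ℝ} (ht : 0 ≤ t) :
    ‖f 0 t - ∑ j ∈ Finset.range r, (t ^ j / j.factorial) • f j 0‖ ≤ t ^ r / r.factorial * B := by
  induction r generalizing f t with
  | zero => simpa using hB t
  | succ r ih =>
    have hpow (j : ℕ) (s : ℝ) :
        HasDerivAt (fun s : ℝ => s ^ (j + 1) / (j + 1).factorial) (s ^ j / j.factorial) s := by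
      refine ((hasDerivAt_pow (j + 1) s).div_const _).congr_deriv ?_
      rw [Nat.factorial_succ, Nat.add_sub_cancel, Nat.cast_mul,
        mul_div_mul_left _ _ (by positivity)]
    have hrem (s : ℝ) : HasDerivAt
        (fun s => f 0 s - ∑ j ∈ Finset.range (r + 1), (s ^ j / j.factorial) • f j 0)
        (f 1 s - ∑ j ∈ Finset.range r, (s ^ j / j.factorial) • f (j + 1) 0) s := by
      simp only [Finset.sum_range_succ', pow_zero, Nat.factorial_zero, Nat.cast_one, div_one,
        one_smul]
      exact (hf 0 s).sub <|
        (HasDerivAt.fun_sum fun j _ => (hpow j s).smul_const (f (j + 1) 0)).add_const _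
    refine image_norm_le_of_norm_deriv_right_le_deriv_boundary (a := 0) (b := t)
      (B := fun s => s ^ (r + 1) / (r + 1).factorial * B)
      (fun s _ => (hrem s).continuousAt.continuousWithinAt)
      (fun s _ => (hrem s).hasDerivWithinAt) ?_ (fun s => (hpow r s).mul_const B)
      (fun s hs => ih (f := fun k => f (k + 1)) (fun k => hf (k + 1)) hB hs.1) ⟨ht, le_rfl⟩
    simp [Finset.sum_range_succ']

theorem norm_sub_taylor_sum_le (hf : ∀ k t, HasDerivAt (f k) (f (k + 1) t) t) {r : ℕ}
    {B : ℝ} (hB : ∀ t, ‖f r t‖ ≤ B) (x h : ℝ) :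
    ‖f 0 (x + h) - ∑ j ∈ Finset.range r, (h ^ j / j.factorial) • f j x‖ ≤
      |h| ^ r / r.factorial * B := by
  have hderiv (k : ℕ) (s : ℝ) : HasDerivAt (fun s => h ^ k • f k (x + s * h))
      (h ^ (k + 1) • f (k + 1) (x + s * h)) s := by
    have hline : HasDerivAt (fun s => x + s * h) h s := by
      simpa using ((hasDerivAt_id s).mul_const h).const_add x
    simpa [smul_smul, pow_succ, Function.comp_def] using
      ((hf k _).scomp s hline).fun_const_smul (h ^ k)
  have := norm_sub_taylor_sum_le_of_nonneg hderiv (r := r) (B := |h| ^ r * B)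
    (fun s => by rw [norm_smul, norm_pow, Real.norm_eq_abs]; gcongr; exact hB _) zero_le_one
  simpa [smul_smul, div_eq_mul_inv, mul_comm, mul_assoc, mul_left_comm] using this

theorem norm_le_taylor_sum (hf : ∀ k t, HasDerivAt (f k) (f (k + 1) t) t) {r : ℕ}
    {B : ℝ} (hB : ∀ t, ‖f r t‖ ≤ B) (x h : ℝ) :
    ‖f 0 (x + h)‖ ≤ ∑ j ∈ Finset.range r, |h| ^ j / j.factorial * ‖f j x‖ +
      |h| ^ r / r.factorial * B := by
  refine (norm_le_norm_add_norm_sub' _ _).trans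
    (add_le_add ?_ (norm_sub_taylor_sum_le hf hB x h))
  refine (norm_sum_le _ _).trans_eq (Finset.sum_congr rfl fun j _ => ?_)
  simp [norm_smul]

variable {M : ℕ → ℝ} {C : ℝ}

theorem le_mul_ratio_pow (hM : ∀ k, 0 < M k)
    (hlc : ∀ k, M (k + 1) ^ 2 ≤ M k * M (k + 2)) {N k j : ℕ} (hkj : k + j ≤ N + 1) :
    M (k + j) ≤ M k * (M (N + 1) / M N) ^ j := by
  have hmono : Monotone fun k => M (k + 1) / M k := monotone_nat_of_le_succ fun k => by
    rw [div_le_div_iff₀ (hM _) (hM _)]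
    linarith [hlc k]
  induction j with
  | zero => simp
  | succ j ih =>
    calc M (k + (j + 1)) = M (k + j) * (M (k + j + 1) / M (k + j)) :=
          (mul_div_cancel₀ _ (hM _).ne').symm
      _ ≤ M k * (M (N + 1) / M N) ^ j * (M (N + 1) / M N) := by
          refine mul_le_mul (ih (by omega)) (hmono (by omega : k + j ≤ N))
            (div_pos (hM _) (hM _)).le ?_
          exact mul_nonneg (hM k).le (pow_nonneg (div_pos (hM _) (hM _)).le j)
      _ = M k * (M (N + 1) / M N) ^ (j + 1) := by ring

theorem exp_sub_mul_le (hM : ∀ k, 0 < M k) (hlc : ∀ k, M (k + 1) ^ 2 ≤ M k * M (k + 2))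
    {N k j : ℕ} (hkj : k + j ≤ N + 1) :
    Real.exp ((k + j : ℕ) - (N + 1 : ℕ)) * M (k + j) ≤
      Real.exp ((k : ℝ) - (N + 1 : ℕ)) * M k * (M (N + 1) / M N * Real.exp 1) ^ j :=
  calc _ ≤ Real.exp ((k + j : ℕ) - (N + 1 : ℕ)) * (M k * (M (N + 1) / M N) ^ j) := by
        gcongr
        exact le_mul_ratio_pow hM hlc hkj
    _ = _ := by
        rw [Nat.cast_add, add_sub_right_comm, Real.exp_add, ← mul_one (j : ℝ), Real.exp_nat_mul]
        ring

/-- The bounds measuring how close `x` is to a common zero of all the `f k` in Bang's proof of the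
Denjoy–Carleman theorem: the trivial bound `‖f k x‖ ≤ C * M k` is improved by the factor
`exp (k - N)`. -/
def BangBound (f : ℕ → ℝ → F) (M : ℕ → ℝ) (C : ℝ) (N : ℕ) (x : ℝ) : Prop :=
  ∀ k : ℕ, ‖f k x‖ ≤ C * Real.exp ((k : ℝ) - N) * M k

theorem BangBound.norm_le_taylor_sum (hf : ∀ k t, HasDerivAt (f k) (f (k + 1) t) t)
    (hfM : ∀ k t, ‖f k t‖ ≤ C * M k) {k r : ℕ} {x : ℝ} (hx : BangBound f M C (k + r) x) (y : ℝ) :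
    ‖f k y‖ ≤ ∑ j ∈ Finset.range (r + 1), |y - x| ^ j / j.factorial *
      (C * Real.exp ((k + j : ℕ) - (k + r : ℕ)) * M (k + j)) := by
  calc ‖f k y‖
      ≤ ∑ j ∈ Finset.range r, |y - x| ^ j / j.factorial * ‖f (k + j) x‖ +
          |y - x| ^ r / r.factorial * (C * M (k + r)) := by
        simpa using _root_.norm_le_taylor_sum (f := fun j => f (k + j)) (fun j => hf (k + j))
          (fun t => hfM (k + r) t) x (y - x)
    _ ≤ _ := by
        rw [Finset.sum_range_succ]
        gcongr ?_ + _ * ?_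
        · gcongr with j
          exact hx (k + j)
        · rw [sub_self, Real.exp_zero, mul_one]

theorem mul_div_mul_exp_le_one {a b d : ℝ} (ha : 0 < a) (hb : 0 < b)
    (hd : d ≤ Real.exp (-1) * (a / b)) : d * (b / a * Real.exp 1) ≤ 1 := by
  refine (mul_le_mul_of_nonneg_right hd (by positivity)).trans_eq ?_
  rw [Real.exp_neg]
  field_simp

theorem BangBound.step (hf : ∀ k t, HasDerivAt (f k) (f (k + 1) t) t)
    (hfM : ∀ k t, ‖f k t‖ ≤ C * M k) (hM : ∀ k, 0 < M k)
    (hlc : ∀ k, M (k + 1) ^ 2 ≤ M k * M (k + 2)) {N : ℕ} {x y : ℝ}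
    (hx : BangBound f M C (N + 1) x)
    (hxy : dist x y ≤ Real.exp (-1) * (M N / M (N + 1))) : BangBound f M C N y := by
  have hC : 0 ≤ C := nonneg_of_mul_nonneg_left ((norm_nonneg _).trans (hfM 0 0)) (hM 0)
  intro k
  obtain hNk | hkN := le_or_gt N k
  · refine (hfM k y).trans (mul_le_mul_of_nonneg_right ?_ (hM k).le)
    exact le_mul_of_one_le_right hC (Real.one_le_exp (sub_nonneg.2 (mod_cast hNk)))
  obtain ⟨r, hr⟩ : ∃ r, k + r = N + 1 := ⟨N + 1 - k, by omega⟩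
  set q := M (N + 1) / M N * Real.exp 1
  have hq : 0 < q := mul_pos (div_pos (hM _) (hM _)) (Real.exp_pos 1)
  have hstep : |y - x| * q ≤ 1 := by
    rw [dist_comm, Real.dist_eq] at hxy
    exact mul_div_mul_exp_le_one (hM _) (hM _) hxy
  calc ‖f k y‖
      ≤ ∑ j ∈ Finset.range (r + 1), |y - x| ^ j / j.factorial *
          (C * Real.exp ((k + j : ℕ) - (N + 1 : ℕ)) * M (k + j)) :=
        hr ▸ (hr ▸ hx : BangBound f M C (k + r) x).norm_le_taylor_sum hf hfM y
    _ ≤ ∑ j ∈ Finset.range (r + 1), |y - x| ^ j / j.factorial *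
          (C * Real.exp ((k : ℝ) - (N + 1 : ℕ)) * M k * q ^ j) := by
        refine Finset.sum_le_sum fun j hj => mul_le_mul_of_nonneg_left ?_ (by positivity)
        simpa only [mul_assoc] using
          mul_le_mul_of_nonneg_left (exp_sub_mul_le hM hlc (by grind)) hC
    _ = C * Real.exp ((k : ℝ) - (N + 1 : ℕ)) * M k *
          ∑ j ∈ Finset.range (r + 1), (|y - x| * q) ^ j / j.factorial := by
        rw [Finset.mul_sum]
        refine Finset.sum_congr rfl fun j _ => ?_
        rw [mul_pow |y - x|]
        ring
    _ ≤ C * Real.exp ((k : ℝ) - (N + 1 : ℕ)) * M k * Real.exp 1 := by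
        have := hM k
        gcongr
        exact (Real.sum_le_exp_of_nonneg (by positivity) _).trans (Real.exp_le_exp.2 hstep)
    _ = C * Real.exp ((k : ℝ) - N) * M k := by
        rw [mul_right_comm, mul_assoc C, ← Real.exp_add]
        push_cast
        ring_nf

theorem BangBound.of_dist_le_sum (hf : ∀ k t, HasDerivAt (f k) (f (k + 1) t) t)
    (hfM : ∀ k t, ‖f k t‖ ≤ C * M k) (hM : ∀ k, 0 < M k)
    (hlc : ∀ k, M (k + 1) ^ 2 ≤ M k * M (k + 2)) {K L : ℕ} (hKL : K ≤ L) {x y : ℝ}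
    (hx : BangBound f M C L x)
    (hxy : dist x y ≤ ∑ i ∈ Finset.Ico K L, Real.exp (-1) * (M i / M (i + 1))) :
    BangBound f M C K y := by
  have hstep (i : ℕ) : 0 ≤ Real.exp (-1) * (M i / M (i + 1)) := by
    have := hM i
    have := hM (i + 1)
    positivity
  induction hKL using Nat.decreasingInduction generalizing y with
  | self => simp_all
  | of_succ K hK ih =>
    rw [Finset.sum_eq_sum_Ico_succ_bot hK] at hxy
    obtain ⟨z, hxz, hzy⟩ :=
      exists_dist_le_le (Finset.sum_nonneg fun i _ => hstep i) (hstep K) hxy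
    exact (ih hxz).step hf hfM hM hlc hzy

theorem CarlemanDivergent.eq_zero_of_hasDerivAt (hdiv : CarlemanDivergent M) (hM : ∀ k, 0 ≤ M k)
    (hlc : ∀ k, M (k + 1) ^ 2 ≤ M k * M (k + 2))
    (hf : ∀ k t, HasDerivAt (f k) (f (k + 1) t) t) (hfM : ∀ k t, ‖f k t‖ ≤ C * M k) {t₀ : ℝ}
    (hzero : ∀ k, f k t₀ = 0) (k : ℕ) (t : ℝ) : f k t = 0 := by
  replace hM := hdiv.pos hM hlc
  have hC : 0 ≤ C := nonneg_of_mul_nonneg_left ((norm_nonneg _).trans (hfM 0 0)) (hM 0)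
  have hbang (N : ℕ) : BangBound f M C N t := by
    have hsum : Filter.Tendsto (fun n => ∑ i ∈ Finset.range n,
        Real.exp (-1) * (M (N + i) / M (N + i + 1))) Filter.atTop Filter.atTop := by
      refine (not_summable_iff_tendsto_nat_atTop_of_nonneg fun i => ?_).1 ?_
      · exact mul_nonneg (Real.exp_pos _).le (div_pos (hM _) (hM _)).le
      · rw [summable_mul_left_iff (Real.exp_pos _).ne']
        simp_rw [add_comm N]
        rw [summable_nat_add_iff N (f := fun i => M i / M (i + 1))]
        exact hdiv.not_summable_ratio hM
    obtain ⟨n, hn⟩ := (hsum.eventually_ge_atTop (dist t₀ t)).exists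
    refine BangBound.of_dist_le_sum hf hfM hM hlc (Nat.le_add_right N n) (x := t₀) (fun k => ?_) ?_
    · rw [hzero, norm_zero]
      have := hM k
      positivity
    · rwa [Finset.sum_Ico_eq_sum_range, Nat.add_sub_cancel_left]
  have hlim : Filter.Tendsto (fun N : ℕ => C * Real.exp ((k : ℝ) - N) * M k)
      Filter.atTop (nhds 0) := by
    have : Filter.Tendsto (fun N : ℕ => Real.exp ((k : ℝ) - N)) Filter.atTop (nhds 0) :=
      Real.tendsto_exp_atBot.comp <| Filter.tendsto_atBot_add_const_left _ _ <|
        Filter.tendsto_neg_atTop_atBot.comp tendsto_natCast_atTop_atTop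
    simpa using (this.const_mul C).mul_const (M k)
  exact norm_le_zero_iff.1 (ge_of_tendsto' hlim fun N => hbang N k)

end QuasiAnalytic

section ModulatedCurve

open scoped ENNReal

theorem hasDerivAt_of_norm_sub_le_sq {F : Type*} [NormedAddCommGroup F] [NormedSpace ℝ F]
    {f : ℝ → F} {f' : F} {x C : ℝ} (hf : ∀ h, ‖f (x + h) - f x - h • f'‖ ≤ C * h ^ 2) :
    HasDerivAt f f' x := by
  rw [hasDerivAt_iff_isLittleO_nhds_zero]
  refine (Asymptotics.IsBigO.of_bound C <| .of_forall fun h => ?_).trans_isLittleO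
    (Asymptotics.isLittleO_pow_id one_lt_two)
  simpa using hf h

/-- The `k`-th derivative in `t` of the function `exp (i t X) * u`, where `t` is a real
parameter. -/
noncomputable def modulated {Ω : Type*} (X : Ω → ℝ) (u : Ω → ℂ) (k : ℕ) (t : ℝ) : Ω → ℂ :=
  fun ω => (X ω * Complex.I) ^ k * Complex.exp (t * X ω * Complex.I) * u ω

variable {Ω : Type*} {X : Ω → ℝ} {u : Ω → ℂ}

theorem norm_modulated (k : ℕ) (t : ℝ) (ω : Ω) :
    ‖modulated X u k t ω‖ = ‖X ω ^ k • u ω‖ := by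
  have : ‖Complex.exp (t * X ω * Complex.I)‖ = 1 := mod_cast Complex.norm_exp_ofReal_mul_I (t * X ω)
  simp [modulated, this]

theorem hasDerivAt_modulated (k : ℕ) (t : ℝ) (ω : Ω) :
    HasDerivAt (fun t => modulated X u k t ω) (modulated X u (k + 1) t ω) t := by
  have hexp : HasDerivAt (fun t : ℝ => (t : ℂ) * X ω * Complex.I) (X ω * Complex.I) t := by
    simpa [mul_assoc] using ((hasDerivAt_id t).ofReal_comp.mul_const (X ω * Complex.I))
  refine ((hexp.cexp.const_mul ((X ω * Complex.I) ^ k)).mul_const (u ω)).congr_deriv ?_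
  rw [modulated]
  ring

variable [MeasurableSpace Ω] {μ : Measure Ω} {p : ℝ≥0∞}

theorem memLp_modulated (hX : AEMeasurable X μ)
    (hXu : ∀ k, MemLp (X ^ k • u) p μ) (k : ℕ) (t : ℝ) :
    MemLp (modulated X u k t) p μ := by
  have hu : AEStronglyMeasurable u μ := by simpa using (hXu 0).1
  have hfactor : Continuous fun x : ℝ =>
      ((x : ℂ) * Complex.I) ^ k * Complex.exp (t * x * Complex.I) := by fun_prop
  exact (hXu k).congr_norm ((hfactor.comp_aestronglyMeasurable hX.aestronglyMeasurable).mul hu)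
    (.of_forall fun ω => (norm_modulated k t ω).symm)

theorem norm_toLp_modulated (hX : AEMeasurable X μ)
    (hXu : ∀ k, MemLp (X ^ k • u) p μ) (k : ℕ) (t : ℝ) :
    ‖(memLp_modulated hX hXu k t).toLp‖ = lpNorm (X ^ k • u) p μ := by
  rw [Lp.norm_toLp, ← toReal_eLpNorm (hXu k).1]
  exact congrArg _ (eLpNorm_congr_norm_ae (.of_forall (norm_modulated k t)))

theorem hasDerivAt_toLp_modulated [Fact (1 ≤ p)] (hX : AEMeasurable X μ)
    (hXu : ∀ k, MemLp (X ^ k • u) p μ) (k : ℕ) (t : ℝ) :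
    HasDerivAt (fun t => (memLp_modulated hX hXu k t).toLp)
      (memLp_modulated hX hXu (k + 1) t).toLp t := by
  set F := fun k t => (memLp_modulated hX hXu k t).toLp
  set B : Lp ℂ p μ := (hXu (k + 2)).toLp
  refine hasDerivAt_of_norm_sub_le_sq (C := ‖B‖ / 2) fun h => ?_
  have hpointwise : ∀ᵐ ω ∂μ, ‖(F k (t + h) - F k t - h • F (k + 1) t) ω‖ ≤
      h ^ 2 / 2 * ‖B ω‖ := by
    filter_upwards [Lp.coeFn_sub (F k (t + h) - F k t) (h • F (k + 1) t),
      Lp.coeFn_sub (F k (t + h)) (F k t), Lp.coeFn_smul h (F (k + 1) t),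
      (memLp_modulated hX hXu k (t + h)).coeFn_toLp, (memLp_modulated hX hXu k t).coeFn_toLp,
      (memLp_modulated hX hXu (k + 1) t).coeFn_toLp, (hXu (k + 2)).coeFn_toLp]
      with ω h₁ h₂ h₃ h₄ h₅ h₆ h₇
    have htaylor := norm_sub_taylor_sum_le (f := fun j t => modulated X u (k + j) t ω) (r := 2)
      (fun j t => hasDerivAt_modulated (k + j) t ω)
      (fun t => (norm_modulated (k + 2) t ω).le) t h
    rw [h₁, Pi.sub_apply, h₂, Pi.sub_apply, h₃, Pi.smul_apply, h₄, h₅, h₆, h₇]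
    simpa [Finset.sum_range_succ, sub_sub] using htaylor
  refine (Lp.norm_le_mul_norm_of_ae_le_mul hpointwise).trans_eq ?_
  ring

end ModulatedCurve

section OneVariable

open scoped ENNReal

variable {Ω : Type*} [MeasurableSpace Ω] {μ : Measure Ω} {p q r : ℝ≥0∞} {X : Ω → ℝ} {u : Ω → ℂ}

theorem lpNorm_smul_le {E : Type*} [NormedAddCommGroup E] [NormedSpace ℝ E] {f : Ω → ℝ}
    {g : Ω → E} [q.HolderTriple r p] (hf : MemLp f q μ) (hg : MemLp g r μ) :
    lpNorm (f • g) p μ ≤ lpNorm f q μ * lpNorm g r μ := by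
  rw [← toReal_eLpNorm (hf.1.smul hg.1), ← toReal_eLpNorm hf.1, ← toReal_eLpNorm hg.1,
    ← ENNReal.toReal_mul]
  exact ENNReal.toReal_mono (ENNReal.mul_ne_top hf.2.ne hg.2.ne)
    (eLpNorm_smul_le_mul_eLpNorm hg.1 hf.1)

theorem lpNorm_sq {f : Ω → ℝ} (hf : AEStronglyMeasurable f μ) :
    lpNorm (f ^ 2) (q / 2) μ = lpNorm f q μ ^ 2 := by
  have hsq := eLpNorm_norm_rpow (p := q / 2) (μ := μ) f two_pos
  rw [ENNReal.ofReal_ofNat, ENNReal.div_mul_cancel two_ne_zero ENNReal.ofNat_ne_top] at hsq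
  simp only [Real.rpow_ofNat, ENNReal.rpow_ofNat, Real.norm_eq_abs, sq_abs] at hsq
  rw [← toReal_eLpNorm (hf.pow 2), ← toReal_eLpNorm hf, ← ENNReal.toReal_pow, ← hsq]
  rfl

theorem lpNorm_pow_succ_sq_le (hX : ∀ k, MemLp (X ^ k) q μ) (k : ℕ) :
    lpNorm (X ^ (k + 1)) q μ ^ 2 ≤ lpNorm (X ^ k) q μ * lpNorm (X ^ (k + 2)) q μ := by
  have : q.HolderTriple q (q / 2) := ⟨by
    rw [ENNReal.inv_div (by simp) (by simp), ENNReal.div_eq_inv_mul, mul_two]⟩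
  rw [← lpNorm_sq (hX (k + 1)).1, ← pow_mul, show (k + 1) * 2 = k + (k + 2) by ring, pow_add]
  exact lpNorm_smul_le (hX k) (hX (k + 2))

theorem toLp_exp_mul_mem_of_carlemanDivergent [Fact (1 ≤ p)] [q.HolderTriple r p]
    (hX : ∀ k, MemLp (X ^ k) q μ) (hdiv : CarlemanDivergent fun k => lpNorm (X ^ k) q μ)
    (hu : MemLp u r μ) {V : Submodule ℂ (Lp ℂ p μ)} (hV : IsClosed (V : Set (Lp ℂ p μ)))
    (hXV : ∀ k (h : MemLp (X ^ k • u) p μ), h.toLp ∈ V) {t : ℝ}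
    (ht : MemLp (fun ω => Complex.exp (t * X ω * Complex.I) * u ω) p μ) : ht.toLp ∈ V := by
  have hXm : AEMeasurable X μ := by simpa using (hX 1).1.aemeasurable
  have hXu (k : ℕ) : MemLp (X ^ k • u) p μ := hu.smul (hX k)
  let π : Lp ℂ p μ →L[ℝ] Lp ℂ p μ ⧸ V := V.mkQL.restrictScalars ℝ
  have hzero := hdiv.eq_zero_of_hasDerivAt (C := lpNorm u r μ) (t₀ := 0)
    (f := fun k t => π (memLp_modulated hXm hXu k t).toLp)
    (fun _ => lpNorm_nonneg) (lpNorm_pow_succ_sq_le hX)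
    (fun k t => π.hasFDerivAt.comp_hasDerivAt t (hasDerivAt_toLp_modulated hXm hXu k t))
    (fun k t => ?_) (fun k => ?_) 0 t
  · convert (Submodule.Quotient.mk_eq_zero V).1 hzero using 2
    ext ω
    simp [modulated]
  · calc _ ≤ ‖(memLp_modulated hXm hXu k t).toLp‖ := Submodule.Quotient.norm_mk_le V _
      _ = lpNorm (X ^ k • u) p μ := norm_toLp_modulated hXm hXu k t
      _ ≤ lpNorm u r μ * lpNorm (X ^ k) q μ :=
        (lpNorm_smul_le (hX k) hu).trans_eq (mul_comm _ _)
  · refine (Submodule.Quotient.mk_eq_zero V).2 ?_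
    convert V.smul_mem (Complex.I ^ k) (hXV k (hXu k))
    rw [← MemLp.toLp_const_smul, MemLp.toLp_eq_toLp_iff]
    refine .of_forall fun ω => ?_
    simp only [modulated, Complex.ofReal_zero, zero_mul, Complex.exp_zero, mul_one, Pi.smul_apply,
      Pi.smul_apply', Pi.pow_apply, Complex.real_smul, Complex.ofReal_pow, smul_eq_mul]
    ring

end OneVariable

section Trigonometric

open scoped ENNReal

variable {Ω ι : Type*} {X : ι → Ω → ℝ}

/-- The character `exp (i ∑ j ∈ s, t j * X j)` of a family `X` of real functions. -/
noncomputable def expSum (X : ι → Ω → ℝ) (s : Finset ι) (t : ι → ℝ) : Ω → ℂ :=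
  fun ω => Complex.exp ((∑ j ∈ s, t j * X j ω : ℝ) * Complex.I)

theorem norm_expSum (s : Finset ι) (t : ι → ℝ) (ω : Ω) : ‖expSum X s t ω‖ = 1 :=
  Complex.norm_exp_ofReal_mul_I _

theorem conj_expSum (s : Finset ι) (t : ι → ℝ) (ω : Ω) :
    starRingEnd ℂ (expSum X s t ω) = expSum X s (-t) ω := by
  simp [expSum, ← Complex.exp_conj]

variable [mΩ : MeasurableSpace Ω] {μ ν : Measure Ω}

theorem measurable_expSum (hX : ∀ j, Measurable (X j)) (s : Finset ι) (t : ι → ℝ) :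
    Measurable (expSum X s t) := by
  unfold expSum
  fun_prop

theorem measure_pi_ext_of_integral_expSum {ν₁ ν₂ : Measure (ι → ℝ)} [IsFiniteMeasure ν₁]
    [IsFiniteMeasure ν₂]
    (h : ∀ s t, ∫ x, expSum (fun j x => x j) s t x ∂ν₁ = ∫ x, expSum (fun j x => x j) s t x ∂ν₂) :
    ν₁ = ν₂ := by
  classical
  have hproj : IsProjectiveLimit ν₁ fun s => ν₂.map s.restrict := by
    refine fun s => Measure.ext_of_charFunDual <| funext fun L => ?_
    obtain ⟨t, ht⟩ : ∃ t : ι → ℝ, ∀ j : s, t j = L fun i => if j = i then 1 else 0 :=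
      ⟨Function.extend Subtype.val _ 0, Subtype.val_injective.extend_apply _ _⟩
    have hL (x : ι → ℝ) : L (s.restrict x) = ∑ j ∈ s, t j * x j := by
      rw [← s.sum_coe_sort]
      simpa [ht, mul_comm] using L.toLinearMap.pi_apply_eq_sum_univ (s.restrict x)
    have hcont : Continuous fun y : s → ℝ => Complex.exp (L y * Complex.I) := by fun_prop
    rw [charFunDual_apply, charFunDual_apply,
      integral_map (by fun_prop) hcont.aestronglyMeasurable,
      integral_map (by fun_prop) hcont.aestronglyMeasurable]
    simpa only [hL, expSum] using h s t
  exact hproj.unique fun s => rfl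

theorem measure_ext_of_integral_expSum [IsFiniteMeasure μ] [IsFiniteMeasure ν]
    (hX : mΩ = MeasurableSpace.comap (fun ω j => X j ω) MeasurableSpace.pi)
    (h : ∀ s t, ∫ ω, expSum X s t ω ∂μ = ∫ ω, expSum X s t ω ∂ν) : μ = ν := by
  have hXm : Measurable fun ω j => X j ω := measurable_iff_comap_le.2 hX.ge
  have hmap : μ.map (fun ω j => X j ω) = ν.map (fun ω j => X j ω) := by
    refine measure_pi_ext_of_integral_expSum fun s t => ?_
    have hmeas := measurable_expSum (X := fun j (x : ι → ℝ) => x j) measurable_pi_apply s t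
    rw [integral_map hXm.aemeasurable hmeas.aestronglyMeasurable,
      integral_map hXm.aemeasurable hmeas.aestronglyMeasurable]
    exact h s t
  ext A hA
  obtain ⟨B, hB, rfl⟩ := hX ▸ hA
  rw [← Measure.map_apply hXm hB, hmap, Measure.map_apply hXm hB]

theorem integral_expSum_withDensity {u : Ω → ℝ} (hu : AEMeasurable u μ) (hu0 : 0 ≤ u) (s : Finset ι)
    (t : ι → ℝ) : ∫ ω, expSum X s t ω ∂(μ.withDensity fun ω => ENNReal.ofReal (u ω)) =
      ∫ ω, expSum X s t ω * u ω ∂μ := by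
  rw [integral_withDensity_eq_integral_toReal_smul₀ hu.ennreal_ofReal
    (.of_forall fun _ => ENNReal.ofReal_lt_top)]
  refine integral_congr_ae (.of_forall fun ω => ?_)
  simp [ENNReal.toReal_ofReal (hu0 ω), mul_comm]

theorem integrable_expSum_mul (hX : ∀ j, Measurable (X j)) {g : Ω → ℂ} (hg : Integrable g μ)
    (s : Finset ι) (t : ι → ℝ) : Integrable (fun ω => expSum X s t ω * g ω) μ :=
  hg.bdd_mul (c := 1) (measurable_expSum hX s t).aestronglyMeasurable
    (.of_forall fun ω => (norm_expSum s t ω).le)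

theorem ae_eq_zero_of_integral_expSum_mul_ofReal [IsFiniteMeasure μ]
    (hX : mΩ = MeasurableSpace.comap (fun ω j => X j ω) MeasurableSpace.pi) {g : Ω → ℝ}
    (hg : Integrable g μ) (h : ∀ s t, ∫ ω, expSum X s t ω * g ω ∂μ = 0) : g =ᵐ[μ] 0 := by
  have hXm (j : ι) : Measurable (X j) :=
    measurable_pi_iff.1 (measurable_iff_comap_le.2 hX.ge) j
  -- The densities `|g| + g` and `|g|` have the same Fourier transform, hence are equal.
  set u : Ω → ℝ := fun ω => |g ω| + g ω
  have hu : Integrable u μ := hg.abs.add hg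
  have hu0 : 0 ≤ u := fun ω => neg_le_iff_add_nonneg.1 (neg_le_abs (g ω))
  have := isFiniteMeasure_withDensity_ofReal hu.2
  have := isFiniteMeasure_withDensity_ofReal hg.abs.2
  have heq : μ.withDensity (fun ω => ENNReal.ofReal (u ω)) =
      μ.withDensity fun ω => ENNReal.ofReal (|g ω|) := by
    refine measure_ext_of_integral_expSum hX fun s t => ?_
    rw [integral_expSum_withDensity hu.aemeasurable hu0,
      integral_expSum_withDensity hg.abs.aemeasurable fun ω => abs_nonneg (g ω),
      ← add_zero (∫ ω, expSum X s t ω * |g ω| ∂μ), ← h s t,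
      ← integral_add]
    · simp only [u, Complex.ofReal_add, mul_add]
    · simpa using integrable_expSum_mul hXm hg.abs.ofReal s t
    · simpa using integrable_expSum_mul hXm hg.ofReal s t
  rw [withDensity_eq_iff_of_sigmaFinite hu.aemeasurable.ennreal_ofReal
    hg.abs.aemeasurable.ennreal_ofReal] at heq
  filter_upwards [heq] with ω hω
  rw [ENNReal.ofReal_eq_ofReal_iff (hu0 ω) (abs_nonneg _)] at hω
  simpa [u] using hω

theorem ae_eq_zero_of_integral_expSum_mul [IsFiniteMeasure μ]
    (hX : mΩ = MeasurableSpace.comap (fun ω j => X j ω) MeasurableSpace.pi) {g : Ω → ℂ}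
    (hg : Integrable g μ) (h : ∀ s t, ∫ ω, expSum X s t ω * g ω ∂μ = 0) : g =ᵐ[μ] 0 := by
  have hXm (j : ι) : Measurable (X j) :=
    measurable_pi_iff.1 (measurable_iff_comap_le.2 hX.ge) j
  have hre (c : ℂ) : (fun ω => (c * g ω).re) =ᵐ[μ] 0 := by
    refine ae_eq_zero_of_integral_expSum_mul_ofReal hX (hg.const_mul c).re fun s t => ?_
    have hconj : ∫ ω, expSum X s t ω * starRingEnd ℂ (g ω) ∂μ = 0 := by
      rw [← map_zero (starRingEnd ℂ), ← h s (-t), ← integral_conj]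
      simp [← conj_expSum]
    have hint := integrable_expSum_mul hXm hg s t
    have hint' : Integrable (fun ω => expSum X s t ω * starRingEnd ℂ (g ω)) μ :=
      integrable_expSum_mul hXm (Complex.conjLIE.integrable_comp_iff.2 hg) s t
    calc ∫ ω, expSum X s t ω * ((c * g ω).re : ℝ) ∂μ
      _ = ∫ ω, (c / 2 * (expSum X s t ω * g ω) +
            starRingEnd ℂ c / 2 * (expSum X s t ω * starRingEnd ℂ (g ω))) ∂μ := by
        refine integral_congr_ae (.of_forall fun ω => ?_)
        simp only [Complex.re_eq_add_conj, map_mul]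
        ring
      _ = 0 := by
        rw [integral_add (hint.const_mul _) (hint'.const_mul _), integral_const_mul,
          integral_const_mul, h, hconj, mul_zero, mul_zero, add_zero]
  filter_upwards [hre 1, hre Complex.I] with ω h₁ h₂
  exact Complex.ext (by simpa using h₁) (by simpa using h₂)

theorem memLp_expSum [IsFiniteMeasure μ] (hX : ∀ j, Measurable (X j)) (p : ℝ≥0∞) (s : Finset ι)
    (t : ι → ℝ) : MemLp (expSum X s t) p μ :=
  .of_bound (measurable_expSum hX s t).aestronglyMeasurable 1
    (.of_forall fun ω => (norm_expSum s t ω).le)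

theorem eq_top_of_toLp_expSum_mem_two [IsFiniteMeasure μ]
    (hX : mΩ = MeasurableSpace.comap (fun ω j => X j ω) MeasurableSpace.pi)
    {W : Submodule ℂ (Lp ℂ 2 μ)} (hW : IsClosed (W : Set (Lp ℂ 2 μ)))
    (hmem : ∀ s t (h : MemLp (expSum X s t) 2 μ), h.toLp ∈ W) : W = ⊤ := by
  have hXm (j : ι) : Measurable (X j) :=
    measurable_pi_iff.1 (measurable_iff_comap_le.2 hX.ge) j
  have : CompleteSpace W := hW.completeSpace_coe
  refine W.orthogonal_eq_bot_iff.1 <| W.orthogonal.eq_bot_iff.2 fun g hg => ?_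
  have hgi : Integrable g μ := (Lp.memLp g).integrable one_le_two
  refine Lp.eq_zero_iff_ae_eq_zero.2 <| ae_eq_zero_of_integral_expSum_mul hX hgi fun s t => ?_
  have h := memLp_expSum (μ := μ) hXm 2 s (-t)
  rw [← W.inner_right_of_mem_orthogonal (hmem s (-t) h) hg, L2.inner_def]
  refine integral_congr_ae ?_
  filter_upwards [h.coeFn_toLp] with ω hω
  rw [hω, RCLike.inner_apply', conj_expSum, neg_neg]

theorem eq_top_of_toLp_expSum_mem_one [IsFiniteMeasure μ]
    (hX : mΩ = MeasurableSpace.comap (fun ω j => X j ω) MeasurableSpace.pi)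
    {V : Submodule ℂ (Lp ℂ 1 μ)} (hV : IsClosed (V : Set (Lp ℂ 1 μ)))
    (hmem : ∀ s t (h : MemLp (expSum X s t) 1 μ), h.toLp ∈ V) : V = ⊤ := by
  let T : Lp ℂ 2 μ →L[ℂ] Lp ℂ 1 μ :=
    (ContinuousLinearMap.mul ℂ ℂ).holderL μ 2 2 1 (Lp.const 2 μ 1)
  have hT {f : Ω → ℂ} (h₂ : MemLp f 2 μ) (h₁ : MemLp f 1 μ) : T h₂.toLp = h₁.toLp := by
    refine Lp.ext ?_
    filter_upwards [(ContinuousLinearMap.mul ℂ ℂ).coeFn_holder (r := 1) (Lp.const 2 μ 1) h₂.toLp,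
      Lp.coeFn_const (p := 2) μ (1 : ℂ), h₁.coeFn_toLp, h₂.coeFn_toLp] with ω h hc h₁ h₂
    rw [h₁, ← one_mul (f ω), ← h₂]
    exact h.trans (congrArg (· * _) hc)
  have htop : V.comap T.toLinearMap = ⊤ :=
    eq_top_of_toLp_expSum_mem_two hX (hV.preimage T.continuous) fun s t h =>
      show T h.toLp ∈ V from hT h (h.mono_exponent one_le_two) ▸ hmem s t _
  refine V.eq_top_iff'.2 fun f => ?_
  refine (Lp.simpleFunc.denseRange ENNReal.one_ne_top).induction_on f hV fun g => ?_
  have hg := (Lp.simpleFunc.toSimpleFunc g).memLp_of_isFiniteMeasure 2 μ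
  rw [← Lp.simpleFunc.toLp_toSimpleFunc g, Lp.simpleFunc.toLp_eq_toLp, ← hT hg]
  exact Submodule.eq_top_iff'.1 htop hg.toLp

end Trigonometric

section PolynomialFunctions

open scoped ENNReal

variable {Ω ι : Type*} {X : ι → Ω → ℝ}

/-- Evaluation of complex polynomials at a family `X` of real functions on `Ω`, as an algebra
homomorphism into the functions on `Ω`. -/
noncomputable def polyFun (X : ι → Ω → ℝ) : MvPolynomial ι ℂ →ₐ[ℂ] Ω → ℂ :=
  MvPolynomial.aeval fun j ω => (X j ω : ℂ)

theorem polyFun_apply (P : MvPolynomial ι ℂ) (ω : Ω) :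
    polyFun X P ω = MvPolynomial.eval (fun j => (X j ω : ℂ)) P := by
  rw [← MvPolynomial.coe_aeval_eq_eval]
  exact MvPolynomial.comp_aeval_apply _ (Pi.evalAlgHom ℂ (fun _ => ℂ) ω) P

theorem polyFun_X_pow (j : ι) (k : ℕ) :
    polyFun X (MvPolynomial.X j ^ k) = fun ω => ((X j ^ k) ω : ℂ) := by
  ext ω
  simp [polyFun]

variable [mΩ : MeasurableSpace Ω] {μ : Measure Ω} {p q r : ℝ≥0∞}

theorem memLp_polyFun [IsFiniteMeasure μ] (hX : ∀ j p, p ≠ ∞ → MemLp (X j) p μ)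
    (P : MvPolynomial ι ℂ) (hp : p ≠ ∞) : MemLp (polyFun X P) p μ := by
  induction P using MvPolynomial.induction_on generalizing p with
  | C a => exact memLp_const (μ := μ) a |>.ae_eq (.of_forall fun ω => by simp [polyFun_apply])
  | add P Q hP hQ => exact map_add (polyFun X) P Q ▸ (hP hp).add (hQ hp)
  | mul_X P j hP =>
    have : (2 * p).HolderTriple (2 * p) p := ⟨by
      rw [ENNReal.mul_inv (by simp) (by simp), ← add_mul, ENNReal.inv_two_add_inv_two, one_mul]⟩
    have h2p : 2 * p ≠ ∞ := ENNReal.mul_ne_top ENNReal.ofNat_ne_top hp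
    rw [map_mul]
    simpa [polyFun] using ((hX j _ h2p).ofReal (K := ℂ)).mul (hP h2p)

/-- The linear map sending a polynomial to the class in `Lp` of its polynomial function. -/
noncomputable def polyLp (hX : ∀ P, MemLp (polyFun X P) p μ) :
    MvPolynomial ι ℂ →ₗ[ℂ] Lp ℂ p μ where
  toFun P := (hX P).toLp
  map_add' P Q := by
    simp only [map_add]
    exact (hX P).toLp_add (hX Q)
  map_smul' c P := by
    simp only [map_smul]
    exact (hX P).toLp_const_smul c

theorem toLp_polyFun_mul_expSum_mem [Fact (1 ≤ p)] [q.HolderTriple r p]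
    (hXm : ∀ j, Measurable (X j)) (hXq : ∀ j k, MemLp (X j ^ k) q μ)
    (hdiv : ∀ j, CarlemanDivergent fun k => lpNorm (X j ^ k) q μ)
    (hXr : ∀ P, MemLp (polyFun X P) r μ) {V : Submodule ℂ (Lp ℂ p μ)}
    (hV : IsClosed (V : Set (Lp ℂ p μ))) (hmem : ∀ P (h : MemLp (polyFun X P) p μ), h.toLp ∈ V)
    (s : Finset ι) (t : ι → ℝ) (P : MvPolynomial ι ℂ)
    (h : MemLp (polyFun X P * expSum X s t) p μ) : h.toLp ∈ V := by
  classical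
  have hmul (s : Finset ι) (P : MvPolynomial ι ℂ) : MemLp (polyFun X P * expSum X s t) r μ :=
    (hXr P).mono ((hXr P).1.mul (measurable_expSum hXm s t).aestronglyMeasurable)
      (.of_forall fun ω => by simp [norm_expSum])
  induction s using Finset.induction_on generalizing P with
  | empty =>
    have h1 : expSum X ∅ t = 1 := by ext; simp [expSum]
    simp only [h1, mul_one] at h ⊢
    exact hmem P h
  | insert j s hj ih =>
    have hexp : polyFun X P * expSum X (insert j s) t = fun ω =>
        Complex.exp (t j * X j ω * Complex.I) * (polyFun X P * expSum X s t) ω := by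
      ext ω
      simp only [Pi.mul_apply, expSum, Finset.sum_insert hj, Complex.ofReal_add, Complex.ofReal_mul,
        add_mul, Complex.exp_add]
      ring
    have hpow (k : ℕ) : X j ^ k • (polyFun X P * expSum X s t) =
        polyFun X (MvPolynomial.X j ^ k * P) * expSum X s t := by
      ext ω
      simp [polyFun_apply, mul_assoc]
    simp only [hexp] at h ⊢
    refine toLp_exp_mul_mem_of_carlemanDivergent (hXq j) (hdiv j) (hmul s P) hV ?_ h
    simp only [hpow]
    exact fun k => ih _

theorem topologicalClosure_range_polyLp_one [IsFiniteMeasure μ]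
    (hX : mΩ = MeasurableSpace.comap (fun ω j => X j ω) MeasurableSpace.pi)
    (hXp : ∀ j p, p ≠ ∞ → MemLp (X j) p μ)
    (hdiv : ∀ j, CarlemanDivergent fun k => lpNorm (X j ^ k) 2 μ) :
    (LinearMap.range (polyLp fun P => memLp_polyFun hXp P ENNReal.one_ne_top)).topologicalClosure
      = ⊤ := by
  have hXm : ∀ j, Measurable (X j) := measurable_pi_iff.1 (measurable_iff_comap_le.2 hX.ge)
  have htwo (P : MvPolynomial ι ℂ) : MemLp (polyFun X P) 2 μ :=
    memLp_polyFun hXp P ENNReal.ofNat_ne_top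
  have hpow (j : ι) (k : ℕ) : MemLp (X j ^ k) 2 μ :=
    (polyFun_X_pow (X := X) j k ▸ htwo (MvPolynomial.X j ^ k)).re
  set V := LinearMap.range (polyLp fun P => memLp_polyFun hXp P ENNReal.one_ne_top)
  refine eq_top_of_toLp_expSum_mem_one hX V.isClosed_topologicalClosure fun s t h => ?_
  have hmem := toLp_polyFun_mul_expSum_mem hXm hpow hdiv htwo V.isClosed_topologicalClosure
    (fun P _ => V.le_topologicalClosure ⟨P, rfl⟩) s t 1
  simp only [map_one, one_mul] at hmem
  exact hmem h

theorem memLp_of_integrable_abs_pow [IsFiniteMeasure μ] {Y : Ω → ℝ} (hY : AEStronglyMeasurable Y μ)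
    (hmom : ∀ m : ℕ, 1 ≤ m → Integrable (fun ω => |Y ω| ^ m) μ) (hp : p ≠ ∞) : MemLp Y p μ := by
  obtain ⟨m, hm⟩ := ENNReal.exists_nat_gt hp
  have hm0 : m ≠ 0 := by rintro rfl; simp at hm
  refine MemLp.mono_exponent ((integrable_norm_rpow_iff hY (by simpa) (by simp)).1 ?_) hm.le
  simpa using hmom m (Nat.one_le_iff_ne_zero.2 hm0)

theorem carlemanDivergent_lpNorm_two {Y : Ω → ℝ} (hY : AEStronglyMeasurable Y μ)
    (h : ¬ Summable fun m : ℕ => (∫ ω, |Y ω| ^ (2 * (m + 1)) ∂μ) ^ (-(1 / (2 * ((m : ℝ) + 1))))) :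
    CarlemanDivergent fun k => lpNorm (Y ^ k) 2 μ := by
  convert h using 3 with m
  beta_reduce
  rw [lpNorm_eq_integral_norm_rpow_toReal two_ne_zero ENNReal.ofNat_ne_top (hY.pow _),
    ← Real.rpow_mul (integral_nonneg fun ω => by positivity)]
  congr 1
  · simp [pow_mul']
  · rw [ENNReal.toReal_ofNat, ← one_div, mul_neg, ← one_div_mul_one_div]

theorem carleman_polynomials_dense_L1_general {Ω ι : Type*} [mΩ : MeasurableSpace Ω]
    (μ : Measure Ω) [IsFiniteMeasure μ] (X : ι → Ω → ℝ)
    (hX : mΩ = MeasurableSpace.comap (fun ω j => X j ω) MeasurableSpace.pi)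
    (hmom : ∀ m : ℕ, 1 ≤ m → ∀ j, Integrable (fun ω => |X j ω| ^ m) μ)
    (hcarleman : ∀ j, ¬ Summable fun m : ℕ =>
      (∫ ω, |X j ω| ^ (2 * (m + 1)) ∂μ) ^ (-(1 / (2 * ((m : ℝ) + 1)))))
    (f : Ω → ℂ) (hf : Integrable f μ) (ε : ℝ) (hε : 0 < ε) :
    ∃ P : MvPolynomial ι ℂ,
      ∫ ω, ‖f ω - MvPolynomial.eval (fun j => (X j ω : ℂ)) P‖ ∂μ < ε := by
  have hXm (j : ι) : AEStronglyMeasurable (X j) μ :=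
    (measurable_pi_iff.1 (measurable_iff_comap_le.2 hX.ge) j).aestronglyMeasurable
  have hXp (j : ι) (p : ℝ≥0∞) (hp : p ≠ ∞) : MemLp (X j) p μ :=
    memLp_of_integrable_abs_pow (hXm j) (fun m hm => hmom m hm j) hp
  have hdense := Submodule.dense_iff_topologicalClosure_eq_top.2 <|
    topologicalClosure_range_polyLp_one hX hXp fun j =>
      carlemanDivergent_lpNorm_two (hXm j) (hcarleman j)
  obtain ⟨_, ⟨P, rfl⟩, hP⟩ := hdense.exists_dist_lt (hf.toL1 f) hε
  have hPi : Integrable (polyFun X P) μ :=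
    memLp_one_iff_integrable.1 (memLp_polyFun hXp P ENNReal.one_ne_top)
  have hdist : dist (hf.toL1 f) (hPi.toL1 _) = ∫ ω, ‖f ω - polyFun X P ω‖ ∂μ := by
    rw [dist_eq_norm, ← Integrable.toL1_sub, L1.norm_of_fun_eq_integral_norm]
    rfl
  exact ⟨P, by simpa only [polyFun_apply] using hdist.symm.trans_lt hP⟩

end PolynomialFunctions

/-- **de Jeu's multidimensional Carleman theorem.** Let `μ` be a finite Borel
measure on `ℝⁿ` with all absolute moments `S_j(m) = ∫ |λ_j|^m dμ` finite.  If for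
each coordinate `j` the even moments satisfy Carleman's condition
`∑_{m≥1} S_j(2m)^{-1/(2m)} = ∞`, then the polynomial functions are dense in
`L¹(ℝⁿ, μ)`. -/
theorem carleman_polynomials_dense_L1 (n : ℕ)
    (μ : Measure (EuclideanSpace ℝ (Fin n))) [IsFiniteMeasure μ]
    (hmom : ∀ m : ℕ, 1 ≤ m → ∀ j : Fin n,
      Integrable (fun lam : EuclideanSpace ℝ (Fin n) => |lam j| ^ m) μ)
    (hcarleman : ∀ j : Fin n, ¬ Summable (fun m : ℕ =>
      (∫ lam : EuclideanSpace ℝ (Fin n), |lam j| ^ (2 * (m + 1)) ∂μ)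
        ^ (-(1 / (2 * ((m : ℝ) + 1)))))) :
    ∀ f : EuclideanSpace ℝ (Fin n) → ℂ, Integrable f μ →
      ∀ ε : ℝ, 0 < ε → ∃ P : MvPolynomial (Fin n) ℂ,
        ∫ lam : EuclideanSpace ℝ (Fin n),
          ‖f lam - MvPolynomial.eval (fun j => ((lam j : ℝ) : ℂ)) P‖ ∂μ < ε := by
  exact carleman_polynomials_dense_L1_general μ (fun j lam => lam j)
    (MeasurableEquiv.toLp 2 (Fin n → ℝ)).symm.measurableEmbedding.comap_eq.symm hmom hcarleman
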